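/- Let n ≥ 2, let Ω ⊆ ℂ be a connected open set, and let φ₁,…,φₙ be smooth real-valued functions on Ω with φ₁+⋯+φₙ = 0 satisfying the A_{n−1} Toda equations. Let A' = diag(∂φ₁,…,∂φₙ) + ℰ₊ and A'' = Σ_{i=1}^{n−1} e^{φᵢ−φᵢ₊₁} E_{i+1,i} be the Toda connection forms. Then there exist a smooth map G: Ω → SLₙ(ℂ) taking values in lower-triangular unipotent matrices and holomorphic functions w₂,…,wₙ on Ω such that G⁻¹A'G + G⁻¹∂G = ℰ₊ + Σ_{j=1}^{n−1} w_{n+1−j}·E_{n,j} (the Drinfeld–Sokolov form, with last row (wₙ, w_{n−1}, …, w₂, 0)) and G⁻¹A''G + G⁻¹∂̄G = 0. -/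

import Mathlib

open Complex Matrix

/-- Wirtinger derivative `∂f = ½(∂ₓf − i ∂_y f)`. -/
noncomputable def wd (f : ℂ → ℂ) (z : ℂ) : ℂ :=
  (1 / 2 : ℂ) * (fderiv ℝ f z 1 - Complex.I * fderiv ℝ f z Complex.I)

/-- Wirtinger derivative `∂̄f = ½(∂ₓf + i ∂_y f)`. -/
noncomputable def wdb (f : ℂ → ℂ) (z : ℂ) : ℂ :=
  (1 / 2 : ℂ) * (fderiv ℝ f z 1 + Complex.I * fderiv ℝ f z Complex.I)

/-- Entrywise Wirtinger derivative `∂A` of a matrix-valued function. -/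
noncomputable def mwd {n : ℕ} (A : ℂ → Matrix (Fin n) (Fin n) ℂ) (z : ℂ) :
    Matrix (Fin n) (Fin n) ℂ :=
  Matrix.of fun i j => wd (fun w => A w i j) z

/-- Entrywise Wirtinger derivative `∂̄A` of a matrix-valued function. -/
noncomputable def mwdb {n : ℕ} (A : ℂ → Matrix (Fin n) (Fin n) ℂ) (z : ℂ) :
    Matrix (Fin n) (Fin n) ℂ :=
  Matrix.of fun i j => wdb (fun w => A w i j) z

/-- Toda connection form `A' = diag(∂φ₁,…,∂φₙ) + ℰ₊`. -/
noncomputable def todaAp (n : ℕ) (φ : Fin n → ℂ → ℝ) (z : ℂ) : Matrix (Fin n) (Fin n) ℂ :=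
  Matrix.of fun (i j : Fin n) =>
    if i = j then wd (fun w => ((φ i w : ℝ) : ℂ)) z
    else if (j : ℕ) = (i : ℕ) + 1 then 1
    else 0

/-- Toda connection form `A'' = Σ_{i=1}^{n−1} e^{φᵢ−φᵢ₊₁} E_{i+1,i}`. -/
noncomputable def todaApp (n : ℕ) (φ : Fin n → ℂ → ℝ) (z : ℂ) : Matrix (Fin n) (Fin n) ℂ :=
  Matrix.of fun (i j : Fin n) =>
    if (i : ℕ) = (j : ℕ) + 1 then ((Real.exp (φ j z - φ i z) : ℝ) : ℂ) else 0

/-- Right-hand side `e^{φᵢ−φᵢ₊₁} − e^{φᵢ₋₁−φᵢ}` of the `A_{n−1}` Toda equations. -/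
noncomputable def todaRHS (n : ℕ) (φ : Fin n → ℂ → ℝ) (i : Fin n) (z : ℂ) : ℂ :=
  (if h : (i : ℕ) + 1 < n then ((Real.exp (φ i z - φ ⟨(i : ℕ) + 1, h⟩ z) : ℝ) : ℂ) else 0) -
  (if 0 < (i : ℕ) then
      ((Real.exp (φ ⟨(i : ℕ) - 1, lt_of_le_of_lt (Nat.sub_le _ _) i.isLt⟩ z - φ i z) : ℝ) : ℂ)
    else 0)

open scoped ContDiff

abbrev Sm (Ω : Set ℂ) (f : ℂ → ℂ) : Prop := ContDiffOn ℝ (⊤ : ℕ∞) f Ω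

lemma Sm.diff {Ω : Set ℂ} (hΩ : IsOpen Ω) {f : ℂ → ℂ} (hf : Sm Ω f) {z : ℂ} (hz : z ∈ Ω) :
    DifferentiableAt ℝ f z :=
  (hf.contDiffAt (hΩ.mem_nhds hz)).differentiableAt (by simp)

lemma Sm.fd {Ω : Set ℂ} (hΩ : IsOpen Ω) {f : ℂ → ℂ} (hf : Sm Ω f) (v : ℂ) :
    Sm Ω (fun z => fderiv ℝ f z v) := by
  have h : ContDiffOn ℝ (⊤ : ℕ∞) (fderiv ℝ f) Ω := hf.fderiv_of_isOpen hΩ (by simp)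
  exact h.clm_apply contDiffOn_const

lemma Sm.wd {Ω : Set ℂ} (hΩ : IsOpen Ω) {f : ℂ → ℂ} (hf : Sm Ω f) : Sm Ω (wd f) := by
  unfold _root_.wd
  exact contDiffOn_const.mul ((hf.fd hΩ 1).sub (contDiffOn_const.mul (hf.fd hΩ I)))

lemma Sm.wdb {Ω : Set ℂ} (hΩ : IsOpen Ω) {f : ℂ → ℂ} (hf : Sm Ω f) : Sm Ω (wdb f) := by
  unfold _root_.wdb
  exact contDiffOn_const.mul ((hf.fd hΩ 1).add (contDiffOn_const.mul (hf.fd hΩ I)))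

lemma wd_mul {f g : ℂ → ℂ} {z : ℂ} (hf : DifferentiableAt ℝ f z) (hg : DifferentiableAt ℝ g z) :
    wd (fun w => f w * g w) z = wd f z * g z + f z * wd g z := by
  unfold wd
  rw [fderiv_fun_mul hf hg]
  simp
  ring

lemma wdb_mul {f g : ℂ → ℂ} {z : ℂ} (hf : DifferentiableAt ℝ f z) (hg : DifferentiableAt ℝ g z) :
    wdb (fun w => f w * g w) z = wdb f z * g z + f z * wdb g z := by
  unfold wdb
  rw [fderiv_fun_mul hf hg]
  simp
  ring

lemma wdb_sub {f g : ℂ → ℂ} {z : ℂ} (hf : DifferentiableAt ℝ f z) (hg : DifferentiableAt ℝ g z) :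
    wdb (fun w => f w - g w) z = wdb f z - wdb g z := by
  unfold wdb
  rw [fderiv_fun_sub hf hg]
  simp
  ring

lemma wd_neg {f : ℂ → ℂ} {z : ℂ} : wd (fun w => - f w) z = - wd f z := by
  unfold wd
  rw [fderiv_fun_neg]
  simp
  ring

lemma wdb_neg {f : ℂ → ℂ} {z : ℂ} : wdb (fun w => - f w) z = - wdb f z := by
  unfold wdb
  rw [fderiv_fun_neg]
  simp
  ring

lemma wd_const (c : ℂ) (z : ℂ) : wd (fun _ => c) z = 0 := by
  simp [wd]

lemma wdb_const (c : ℂ) (z : ℂ) : wdb (fun _ => c) z = 0 := by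
  simp [wdb]

lemma wd_congr {Ω : Set ℂ} (hΩ : IsOpen Ω) {f g : ℂ → ℂ} (h : ∀ z ∈ Ω, f z = g z) {z : ℂ}
    (hz : z ∈ Ω) : wd f z = wd g z := by
  have : f =ᶠ[nhds z] g := by
    filter_upwards [hΩ.mem_nhds hz] with x hx using h x hx
  unfold wd
  rw [this.fderiv_eq]

lemma fderiv_wd {Ω : Set ℂ} (hΩ : IsOpen Ω) {f : ℂ → ℂ} (hf : Sm Ω f) {z : ℂ} (hz : z ∈ Ω)
    (u v : ℂ) : fderiv ℝ (fun w => fderiv ℝ f w v) z u = fderiv ℝ (fderiv ℝ f) z u v := by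
  have h : ContDiffOn ℝ (⊤ : ℕ∞) (fderiv ℝ f) Ω := hf.fderiv_of_isOpen hΩ (by simp)
  have hd : DifferentiableAt ℝ (fderiv ℝ f) z :=
    (h.contDiffAt (hΩ.mem_nhds hz)).differentiableAt (by simp)
  rw [fderiv_clm_apply hd (differentiableAt_const v)]
  simp

lemma wd_wdb_comm {Ω : Set ℂ} (hΩ : IsOpen Ω) {f : ℂ → ℂ} (hf : Sm Ω f) {z : ℂ} (hz : z ∈ Ω) :
    wdb (wd f) z = wd (wdb f) z := by
  have hs : IsSymmSndFDerivAt ℝ f z :=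
    (hf.contDiffAt (hΩ.mem_nhds hz)).isSymmSndFDerivAt (by
      simp only [minSmoothness_of_isRCLikeNormedField]
      exact WithTop.coe_le_coe.2 (le_top : (2 : ℕ∞) ≤ ⊤))
  have e1 := (hf.fd hΩ 1).diff hΩ hz
  have e2 := (hf.fd hΩ I).diff hΩ hz
  have h1 : fderiv ℝ (wd f) z = (1/2 : ℂ) • (fderiv ℝ (fun w => fderiv ℝ f w 1) z
      - I • fderiv ℝ (fun w => fderiv ℝ f w I) z) := by
    unfold wd
    rw [fderiv_const_mul (e1.fun_sub (e2.const_mul I)), fderiv_fun_sub e1 (e2.const_mul I),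
      fderiv_const_mul e2]
  have h2 : fderiv ℝ (wdb f) z = (1/2 : ℂ) • (fderiv ℝ (fun w => fderiv ℝ f w 1) z
      + I • fderiv ℝ (fun w => fderiv ℝ f w I) z) := by
    unfold wdb
    rw [fderiv_const_mul (e1.fun_add (e2.const_mul I)), fderiv_fun_add e1 (e2.const_mul I),
      fderiv_const_mul e2]
  rw [wdb, wd, h1, h2]
  simp only [_root_.smul_apply, _root_.sub_apply, _root_.add_apply,
    smul_eq_mul, fderiv_wd hΩ hf hz]
  rw [hs.eq I 1]
  ring

/-- Rows of the gauge transformation, as coefficient sequences. -/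
noncomputable def PP (a : ℕ → ℂ → ℂ) : ℕ → ℕ → ℂ → ℂ
  | 0, j => fun _ => if j = 0 then 1 else 0
  | i + 1, 0 => fun z => 0 - a i z * PP a i 0 z - wd (PP a i 0) z
  | i + 1, j + 1 => fun z => PP a i j z - a i z * PP a i (j + 1) z - wd (PP a i (j + 1)) z

lemma PP_smooth {Ω : Set ℂ} (hΩ : IsOpen Ω) {a : ℕ → ℂ → ℂ} (ha : ∀ i, Sm Ω (a i)) :
    ∀ i j, Sm Ω (PP a i j) := by
  intro i
  induction i with
  | zero => intro j; simp only [PP]; exact contDiffOn_const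
  | succ i ih =>
    intro j
    cases j with
    | zero =>
      simp only [PP]
      exact (contDiffOn_const.sub ((ha i).mul (ih 0))).sub ((ih 0).wd hΩ)
    | succ j =>
      simp only [PP]
      exact ((ih j).sub ((ha i).mul (ih (j+1)))).sub ((ih (j+1)).wd hΩ)

lemma PP_upper (a : ℕ → ℂ → ℂ) : ∀ i j, i < j → PP a i j = fun _ => 0 := by
  intro i
  induction i with
  | zero => intro j hj; simp [PP, hj.ne']
  | succ i ih =>
    intro j hj
    cases j with
    | zero => omega
    | succ j =>
      simp only [PP, ih j (by omega), ih (j+1) (by omega), wd_const]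
      simp

lemma PP_diag (a : ℕ → ℂ → ℂ) : ∀ i, PP a i i = fun _ => 1 := by
  intro i
  induction i with
  | zero => simp [PP]
  | succ i ih =>
    simp only [PP, ih, PP_upper a i (i+1) (by omega), wd_const]
    simp

lemma PP_sub (a : ℕ → ℂ → ℂ) : ∀ i z, PP a (i + 1) i z = - ∑ k ∈ Finset.range (i + 1), a k z := by
  intro i z
  induction i with
  | zero => simp [PP, wd_const]
  | succ i ih =>
    rw [Finset.sum_range_succ, neg_add, ← ih]
    have e : PP a (i+1+1) (i+1) z =
        PP a (i+1) i z - a (i+1) z * PP a (i+1) (i+1) z - wd (PP a (i+1) (i+1)) z := by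
      conv_lhs => rw [PP]
    rw [e, PP_diag a (i+1), wd_const]
    ring

lemma PP_wdb {Ω : Set ℂ} (hΩ : IsOpen Ω) {n : ℕ} {a u : ℕ → ℂ → ℂ} (ha : ∀ i, Sm Ω (a i))
    (hu : ∀ i, Sm Ω (u i)) (hu0 : ∀ z ∈ Ω, u 0 z = 0)
    (hau : ∀ i, i < n → ∀ z ∈ Ω, wdb (a i) z = u (i + 1) z - u i z)
    (hua : ∀ i, i + 1 < n → ∀ z ∈ Ω, wd (u (i + 1)) z = (a i z - a (i + 1) z) * u (i + 1) z) :
    ∀ i, i < n → ∀ j, ∀ z ∈ Ω, wdb (PP a (i + 1) j) z = - (u (i + 1) z * PP a i j z) := by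
  have hP := PP_smooth hΩ ha
  intro i
  induction i with
  | zero =>
    intro hi j z hz
    have key : PP a 1 j = fun z => (if j = 1 then 1 else 0) - a 0 z * (if j = 0 then 1 else 0) := by
      rcases j with _ | _ | j <;> simp [PP, wd_const]
    rw [key, wdb_sub (differentiableAt_const _)
        (((ha 0).diff hΩ hz).fun_mul (differentiableAt_const _)),
      wdb_mul ((ha 0).diff hΩ hz) (differentiableAt_const _), wdb_const, wdb_const, hau 0 hi z hz, hu0 z hz]
    simp [PP]
  | succ i ih =>
    intro hi j z hz
    have ih := ih (by omega)
    have main : ∀ j, ∀ q : ℂ → ℂ, Sm Ω q → ∀ r : ℂ → ℂ, wdb q z = - (u (i+1) z * r z) →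
        PP a (i+1) j z = r z - a i z * PP a i j z - wd (PP a i j) z →
        wdb (fun z => q z - a (i+1) z * PP a (i+1) j z - wd (PP a (i+1) j) z) z
          = - (u (i+1+1) z * PP a (i+1) j z) := by
      intro j q hq r hqr hr
      have d1 := hq.diff hΩ hz
      have d2 := (ha (i+1)).diff hΩ hz
      have d3 := (hP (i+1) j).diff hΩ hz
      have d4 := ((hP (i+1) j).wd hΩ).diff hΩ hz
      have d5 := (hP i j).diff hΩ hz
      have d6 := (hu (i+1)).diff hΩ hz
      rw [wdb_sub (d1.fun_sub (d2.fun_mul d3)) d4, wdb_sub d1 (d2.fun_mul d3), wdb_mul d2 d3,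
        wd_wdb_comm hΩ (hP (i+1) j) hz, wd_congr hΩ (ih j) hz, wd_neg, wd_mul d6 d5, ih j z hz,
        hau (i+1) hi z hz, hua i hi z hz, hqr]
      linear_combination (u (i+1) z) * hr
    cases j with
    | zero =>
      have := main 0 (fun _ => 0) contDiffOn_const (fun _ => 0) (by simp [wdb_const]) (by simp [PP])
      simpa only [PP] using this
    | succ j =>
      have := main (j+1) (PP a (i+1) j) (hP _ _) (PP a i j) (ih j z hz) (by simp [PP])
      simpa only [PP] using this

lemma sum_pick {n : ℕ} (F : ℕ → ℂ) (m : ℕ) (c : ℂ) :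
    ∑ k : Fin n, (if (k : ℕ) = m then c else 0) * F k = if m < n then c * F m else 0 := by
  rw [Fin.sum_univ_eq_sum_range (fun k => (if k = m then c else 0) * F k) n]
  simp [ite_mul]

/-- For a solution of the `A_{n−1}` Toda equations there is a smooth lower-triangular
unipotent `SLₙ(ℂ)`-valued gauge transformation `G` and holomorphic functions `w₂,…,wₙ`
bringing the Toda connection to the Drinfeld–Sokolov form, with `∂̄`-part zero and `∂`-part
`ℰ₊ + Σ_{j=1}^{n−1} w_{n+1−j}·E_{n,j}` (last row `(wₙ, w_{n−1}, …, w₂, 0)`). -/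
theorem toda_to_drinfeld_sokolov (n : ℕ) (hn : 2 ≤ n) (Ω : Set ℂ) (hΩ : IsOpen Ω)
    (hconn : IsConnected Ω)
    (φ : Fin n → ℂ → ℝ) (hφ : ∀ i, ContDiffOn ℝ (⊤ : ℕ∞) (φ i) Ω)
    (hsum : ∀ z ∈ Ω, ∑ i, φ i z = 0)
    (htoda : ∀ z ∈ Ω, ∀ i : Fin n,
      wd (fun w => wdb (fun v => ((φ i v : ℝ) : ℂ)) w) z = todaRHS n φ i z) :
    ∃ (G : ℂ → Matrix (Fin n) (Fin n) ℂ) (w : ℕ → ℂ → ℂ),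
      (∀ i j : Fin n, ContDiffOn ℝ (⊤ : ℕ∞) (fun z => G z i j) Ω) ∧
      (∀ z ∈ Ω, ∀ i : Fin n, G z i i = 1) ∧
      (∀ z ∈ Ω, ∀ i j : Fin n, (i : ℕ) < (j : ℕ) → G z i j = 0) ∧
      (∀ z ∈ Ω, (G z).det = 1) ∧
      (∀ k : ℕ, 2 ≤ k → k ≤ n → ∀ z ∈ Ω, wdb (w k) z = 0) ∧
      (∀ z ∈ Ω,
        (G z)⁻¹ * todaAp n φ z * G z + (G z)⁻¹ * mwd G z =
          Matrix.of fun (i j : Fin n) =>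
            if (j : ℕ) = (i : ℕ) + 1 then 1
            else if (i : ℕ) = n - 1 ∧ (j : ℕ) + 1 < n then w (n - (j : ℕ)) z
            else 0) ∧
      (∀ z ∈ Ω, (G z)⁻¹ * todaApp n φ z * G z + (G z)⁻¹ * mwdb G z = 0) := by
  classical
  let ψ : ℕ → ℂ → ℝ := fun i z => if h : i < n then φ ⟨i, h⟩ z else 0
  have hψ : ∀ i, ContDiffOn ℝ (⊤ : ℕ∞) (ψ i) Ω := by
    intro i
    by_cases h : i < n
    · simpa [ψ, h] using hφ ⟨i, h⟩
    · simpa [ψ, h] using contDiffOn_const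
  have hψφ : ∀ i : Fin n, ψ i = φ i := by
    intro i; funext z; simp [ψ]
  have hψc : ∀ i, Sm Ω (fun z => (ψ i z : ℂ)) := fun i =>
    Complex.ofRealCLM.contDiff.comp_contDiffOn (hψ i)
  let a : ℕ → ℂ → ℂ := fun i => wd (fun z => (ψ i z : ℂ))
  let u : ℕ → ℂ → ℂ := fun i z =>
    if 0 < i ∧ i < n then Complex.exp ((ψ (i-1) z : ℂ) - (ψ i z : ℂ)) else 0
  have ha : ∀ i, Sm Ω (a i) := fun i => (hψc i).wd hΩ
  have hu : ∀ i, Sm Ω (u i) := by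
    intro i
    by_cases h : 0 < i ∧ i < n
    · simp only [u, h, and_self, if_true]
      exact ((hψc (i-1)).sub (hψc i)).cexp
    · simp only [u, h, if_false]
      exact contDiffOn_const
  have hu0 : ∀ z ∈ Ω, u 0 z = 0 := by intro z _; simp [u]
  have hau : ∀ i, i < n → ∀ z ∈ Ω, wdb (a i) z = u (i + 1) z - u i z := by
    intro i hi z hz
    have h := htoda z hz ⟨i, hi⟩
    have e : wdb (a i) z = wd (wdb (fun z => (ψ i z : ℂ))) z := wd_wdb_comm hΩ (hψc i) hz
    rw [e]
    rw [← hψφ ⟨i, hi⟩] at h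
    refine Eq.trans h ?_
    unfold todaRHS
    congr 1
    · by_cases h1 : i + 1 < n
      · simp [u, h1, ψ, hi]
      · simp [u, h1]
    · by_cases h1 : 0 < i
      · have : i - 1 < n := by omega
        simp [u, h1, ψ, hi, this]
      · simp [u, h1]
  have hua : ∀ i, i + 1 < n → ∀ z ∈ Ω,
      wd (u (i + 1)) z = (a i z - a (i + 1) z) * u (i + 1) z := by
    intro i hi z hz
    have d1 := (hψc i).diff hΩ hz
    have d2 := (hψc (i+1)).diff hΩ hz
    have e : u (i+1) = fun z => Complex.exp ((ψ i z : ℂ) - (ψ (i+1) z : ℂ)) := by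
      funext z; simp [u, hi]
    rw [e]
    simp only [a, wd]
    have := (d1.hasFDerivAt.sub d2.hasFDerivAt).cexp.fderiv
    simp only [Pi.sub_apply] at this
    erw [this]
    simp only [_root_.smul_apply, _root_.sub_apply, smul_eq_mul]
    ring
  have hP := PP_smooth hΩ ha
  have hbar := PP_wdb hΩ ha hu hu0 hau hua
  have hsuma : ∀ z ∈ Ω, ∑ k ∈ Finset.range n, a k z = 0 := by
    intro z hz
    have h0 : wd (fun w => ∑ k ∈ Finset.range n, (ψ k w : ℂ)) z = 0 := by
      rw [wd_congr hΩ (g := fun _ => 0) _ hz, wd_const]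
      intro w hw
      have := hsum w hw
      rw [← Fin.sum_univ_eq_sum_range (fun k => (ψ k w : ℂ)) n]
      simp only [hψφ]
      exact_mod_cast this
    rw [← h0]
    simp only [a, wd]
    rw [fderiv_fun_sum (fun i _ => (hψc i).diff hΩ hz)]
    simp [Finset.mul_sum, Finset.sum_sub_distrib, mul_sub]
  let G : ℂ → Matrix (Fin n) (Fin n) ℂ := fun z => Matrix.of fun i j => PP a i j z
  have hGdet : ∀ z, (G z).det = 1 := by
    intro z
    rw [Matrix.det_of_isLowerTriangular]
    · simp [G, PP_diag]
    · intro i j hij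
      have hij : (i : ℕ) < j := hij
      simp [G, PP_upper a i j hij]
  have hinv : ∀ z, (G z)⁻¹ * G z = 1 := fun z =>
    Matrix.nonsing_inv_mul _ (by rw [hGdet]; exact isUnit_one)
  refine ⟨G, fun k z => - PP a n (n - k) z, fun i j => hP i j, fun z _ i => ?_,
    fun z _ i j hij => ?_, fun z _ => hGdet z, ?_, ?_, ?_⟩
  · simp [G, PP_diag]
  · simp [G, PP_upper a i j hij]
  · intro k hk hkn z hz
    obtain ⟨m, rfl⟩ : ∃ m, n = m + 1 := ⟨n - 1, by omega⟩
    rw [wdb_neg, hbar m (by omega) _ z hz]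
    simp [u]
  · intro z hz
    rw [Matrix.mul_assoc, ← Matrix.mul_add]
    have hcancel : ∀ W X : Matrix (Fin n) (Fin n) ℂ, X = G z * W → (G z)⁻¹ * X = W := by
      intro W X h
      rw [h, ← Matrix.mul_assoc, hinv, Matrix.one_mul]
    apply hcancel
    ext i j
    simp only [Matrix.add_apply, Matrix.mul_apply]
    have hL : ∀ k : Fin n, todaAp n φ z i k * G z k j =
        (if (k : ℕ) = i then a i z else 0) * PP a k j z
        + (if (k : ℕ) = i + 1 then 1 else 0) * PP a k j z := by
      intro k
      simp only [todaAp, G, Matrix.of_apply, ← hψφ]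
      by_cases h1 : i = k
      · subst h1; simp [a]
      · have : ¬ (k : ℕ) = i := fun h => h1 (Fin.ext h.symm)
        simp [h1, this]
    have hR : ∀ k : Fin n, G z i k * (if (j : ℕ) = (k : ℕ) + 1 then 1
            else if (k : ℕ) = n - 1 ∧ (j : ℕ) + 1 < n then - PP a n (n - (n - (j : ℕ))) z
            else 0) =
        (if (j : ℕ) = (k : ℕ) + 1 then 1 else 0) * PP a i k z
        + (if (k : ℕ) = n - 1 then (if (j : ℕ) + 1 < n then - PP a n j z else 0) else 0)
          * PP a i k z := by
      intro k
      have hj := j.isLt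
      rw [show n - (n - (j : ℕ)) = j by omega]
      simp only [G, Matrix.of_apply]
      by_cases h1 : (j : ℕ) = (k : ℕ) + 1
      · have : ¬ (k : ℕ) = n - 1 := by omega
        simp [h1, this]
      · by_cases h2 : (k : ℕ) = n - 1
        · rw [if_neg h1, if_neg h1]
          simp only [h2, if_true, true_and]
          ring
        · simp [h1, h2]
    simp only [Matrix.of_apply]
    rw [Finset.sum_congr rfl (fun k _ => hL k), Finset.sum_congr rfl (fun k _ => hR k),
      Finset.sum_add_distrib, Finset.sum_add_distrib,
      sum_pick (fun k => PP a k j z), sum_pick (fun k => PP a k j z),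
      sum_pick (fun k => PP a i k z)]
    have hm : mwd G z i j = wd (PP a i j) z := rfl
    rw [hm]
    have hshift : ∑ k : Fin n, (if (j : ℕ) = (k : ℕ) + 1 then (1 : ℂ) else 0) * PP a i k z
        = PP a (i + 1) j z + a i z * PP a i j z + wd (PP a i j) z := by
      have hj := j.isLt
      rcases hjj : (j : ℕ) with _ | m
      · simp [PP]
        ring
      · have := sum_pick (n := n) (fun k => PP a i k z) m 1
        simp only [show ∀ k : ℕ, (m + 1 = k + 1) ↔ k = m by omega]
        rw [this, if_pos (by omega)]
        simp [PP]
        ring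
    rw [hshift]
    have hi := i.isLt
    have hj := j.isLt
    rw [if_pos hi, if_pos (by omega : n - 1 < n)]
    by_cases h1 : (i : ℕ) + 1 < n
    · rw [if_pos h1, PP_upper a i (n-1) (by omega)]
      ring
    · have hin : (i : ℕ) = n - 1 := by omega
      have hin' : n - 1 + 1 = n := by omega
      rw [if_neg h1, hin, PP_diag, hin']
      by_cases h2 : (j : ℕ) + 1 < n
      · rw [if_pos h2]; ring
      · have hjn : (j : ℕ) = n - 1 := by omega
        have : PP a n (n - 1) z = 0 := by
          have := PP_sub a (n - 1) z
          rw [hin', hsuma z hz] at this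
          simpa using this
        rw [if_neg h2, hjn, this]
        ring
  · intro z hz
    rw [Matrix.mul_assoc, ← Matrix.mul_add]
    rw [show todaApp n φ z * G z + mwdb G z = 0 from ?_, Matrix.mul_zero]
    ext i j
    simp only [Matrix.add_apply, Matrix.mul_apply, Matrix.zero_apply]
    have hm : mwdb G z i j = wdb (PP a i j) z := rfl
    rw [hm]
    have hi := i.isLt
    rcases hii : (i : ℕ) with _ | m
    · simp [todaApp, hii, PP, wdb_const]
    · rw [hbar m (by omega) j z hz]
      have hL : ∀ k : Fin n, todaApp n φ z i k * G z k j =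
          (if (k : ℕ) = m then u (m + 1) z else 0) * PP a k j z := by
        intro k
        simp only [todaApp, G, Matrix.of_apply, hii]
        by_cases h : (k : ℕ) = m
        · have h3 : m + 1 < n := by omega
          have e1 : φ k z = ψ m z := by rw [← hψφ, h]
          have e2 : φ i z = ψ (m+1) z := by rw [← hψφ, hii]
          simp [h, u, h3, e1, e2]
        · have : ¬ m = (k : ℕ) := fun h' => h h'.symm
          simp [h, this]
      rw [Finset.sum_congr rfl (fun k _ => hL k), sum_pick (fun k => PP a k j z),
        if_pos (by omega)]
      ring
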